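/- Let (M, ⊗, I, α, λ, ρ) be a right skew monoidal category and (A, ⊙, a², a⁰) an oplax right M-actegory. Then the endofunctor G := (−) ⊙ I : A ⥤ A carries a comonad structure with counit ε_x := a⁰_x : x ⊙ I ⟶ x and comultiplication δ_x := (id_x ⊙ λ_I) ≫ a²_{x,I,I} : x ⊙ I ⟶ (x ⊙ I) ⊙ I; that is, δ and ε are natural transformations and satisfy the coassociativity and the two counit laws of a comonad on A. -/

import Mathlib

open CategoryTheory

universe v₁ v₂ v₃ v₄ u₁ u₂ u₃ u₄

/-- A right skew monoidal structure on a category `M`: a tensor product bifunctor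
(encoded by its action `t` on objects and `tmap` on morphisms, with functoriality),
a unit object `I`, and natural families `assoc`, `lunit`, `runit` (not required to be
invertible) satisfying the five axioms (SKM1)–(SKM5). -/
structure RightSkewMonoidal (M : Type u₁) [Category.{v₁} M] where
  t : M → M → M
  tmap : ∀ {X X' Y Y' : M}, (X ⟶ X') → (Y ⟶ Y') → (t X Y ⟶ t X' Y')
  tmap_id : ∀ X Y : M, tmap (𝟙 X) (𝟙 Y) = 𝟙 (t X Y)
  tmap_comp : ∀ {X X' X'' Y Y' Y'' : M}
    (f : X ⟶ X') (f' : X' ⟶ X'') (g : Y ⟶ Y') (g' : Y' ⟶ Y''),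
    tmap (f ≫ f') (g ≫ g') = tmap f g ≫ tmap f' g'
  I : M
  assoc : ∀ X Y Z : M, t X (t Y Z) ⟶ t (t X Y) Z
  lunit : ∀ X : M, X ⟶ t I X
  runit : ∀ X : M, t X I ⟶ X
  assoc_natural : ∀ {X X' Y Y' Z Z' : M} (f : X ⟶ X') (g : Y ⟶ Y') (h : Z ⟶ Z'),
    tmap f (tmap g h) ≫ assoc X' Y' Z' = assoc X Y Z ≫ tmap (tmap f g) h
  lunit_natural : ∀ {X X' : M} (f : X ⟶ X'), f ≫ lunit X' = lunit X ≫ tmap (𝟙 I) f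
  runit_natural : ∀ {X X' : M} (f : X ⟶ X'), tmap f (𝟙 I) ≫ runit X' = runit X ≫ f
  skm1 : ∀ X Y Z W : M,
    assoc X Y (t Z W) ≫ assoc (t X Y) Z W =
      tmap (𝟙 X) (assoc Y Z W) ≫ assoc X (t Y Z) W ≫ tmap (assoc X Y Z) (𝟙 W)
  skm2 : ∀ X Y : M,
    tmap (𝟙 X) (lunit Y) ≫ assoc X I Y ≫ tmap (runit X) (𝟙 Y) = 𝟙 (t X Y)
  skm3 : ∀ X Y : M, lunit (t X Y) ≫ assoc I X Y = tmap (lunit X) (𝟙 Y)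
  skm4 : ∀ X Y : M, assoc X Y I ≫ runit (t X Y) = tmap (𝟙 X) (runit Y)
  skm5 : lunit I ≫ runit I = 𝟙 I

/-- `(C, C2, C0)` is an opmonoidal functor between the right skew monoidal categories
`(M, S)` and `(N, S')`: `C2` is a natural family and the axioms (OM1)–(OM3) hold. -/
structure IsOpmonoidalFunctor {M : Type u₁} [Category.{v₁} M] {N : Type u₂} [Category.{v₂} N]
    (S : RightSkewMonoidal M) (S' : RightSkewMonoidal N)
    (C : M ⥤ N)
    (C2 : ∀ m n : M, C.obj (S.t m n) ⟶ S'.t (C.obj m) (C.obj n))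
    (C0 : C.obj S.I ⟶ S'.I) : Prop where
  C2_natural : ∀ {m m' n n' : M} (f : m ⟶ m') (g : n ⟶ n'),
    C.map (S.tmap f g) ≫ C2 m' n' = C2 m n ≫ S'.tmap (C.map f) (C.map g)
  om1 : ∀ m n p : M,
    C.map (S.assoc m n p) ≫ C2 (S.t m n) p ≫ S'.tmap (C2 m n) (𝟙 (C.obj p)) =
      C2 m (S.t n p) ≫ S'.tmap (𝟙 (C.obj m)) (C2 n p) ≫
        S'.assoc (C.obj m) (C.obj n) (C.obj p)
  om2 : ∀ m : M,
    C2 m S.I ≫ S'.tmap (𝟙 (C.obj m)) C0 ≫ S'.runit (C.obj m) = C.map (S.runit m)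
  om3 : ∀ m : M,
    C.map (S.lunit m) ≫ C2 S.I m ≫ S'.tmap C0 (𝟙 (C.obj m)) = S'.lunit (C.obj m)

/-- `(act, actmap, a2, a0)` is an oplax right actegory over the right skew monoidal
category `(M, S)`: `act`/`actmap` form a bifunctor, `a2` and `a0` are natural families,
and the axioms (OLA1)–(OLA3) hold. -/
structure IsOplaxRightActegory {M : Type u₁} [Category.{v₁} M] (S : RightSkewMonoidal M)
    {A : Type u₂} [Category.{v₂} A]
    (act : A → M → A)
    (actmap : ∀ {x x' : A} {m m' : M}, (x ⟶ x') → (m ⟶ m') → (act x m ⟶ act x' m'))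
    (a2 : ∀ (x : A) (m n : M), act x (S.t m n) ⟶ act (act x m) n)
    (a0 : ∀ x : A, act x S.I ⟶ x) : Prop where
  actmap_id : ∀ (x : A) (m : M), actmap (𝟙 x) (𝟙 m) = 𝟙 (act x m)
  actmap_comp : ∀ {x x' x'' : A} {m m' m'' : M}
    (f : x ⟶ x') (f' : x' ⟶ x'') (g : m ⟶ m') (g' : m' ⟶ m''),
    actmap (f ≫ f') (g ≫ g') = actmap f g ≫ actmap f' g'
  a2_natural : ∀ {x x' : A} {m m' n n' : M} (f : x ⟶ x') (g : m ⟶ m') (h : n ⟶ n'),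
    actmap f (S.tmap g h) ≫ a2 x' m' n' = a2 x m n ≫ actmap (actmap f g) h
  a0_natural : ∀ {x x' : A} (f : x ⟶ x'), actmap f (𝟙 S.I) ≫ a0 x' = a0 x ≫ f
  ola1 : ∀ (x : A) (m n p : M),
    a2 x m (S.t n p) ≫ a2 (act x m) n p =
      actmap (𝟙 x) (S.assoc m n p) ≫ a2 x (S.t m n) p ≫ actmap (a2 x m n) (𝟙 p)
  ola2 : ∀ (x : A) (m : M), a2 x m S.I ≫ a0 (act x m) = actmap (𝟙 x) (S.runit m)
  ola3 : ∀ (x : A) (m : M),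
    actmap (𝟙 x) (S.lunit m) ≫ a2 x S.I m ≫ actmap (a0 x) (𝟙 m) = 𝟙 (act x m)

/-!
The unit `I` is a comonoid with comultiplication `λ_I` and identity counit: coassociativity is
naturality of `λ` together with (SKM3), one counit law is trivial and the other is (SKM5). An oplax
action amounts to an opmonoidal functor from `M` to the endofunctors of `A`, and such functors
carry comonoids to comonoids, that is, to comonads on `A`.
-/

namespace RightSkewMonoidal

variable {M : Type u₁} [Category.{v₁} M]

/-- A comonoid in a right skew monoidal category. As the unit constraints are not invertible, they
enter in their given directions: one counit law compares a map with `lunit`, while the other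
composes with `runit`. -/
structure Comonoid (S : RightSkewMonoidal M) where
  X : M
  comul : X ⟶ S.t X X
  counit : X ⟶ S.I
  coassoc : comul ≫ S.tmap (𝟙 X) comul ≫ S.assoc X X X = comul ≫ S.tmap comul (𝟙 X)
  comul_counit_id : comul ≫ S.tmap counit (𝟙 X) = S.lunit X
  comul_id_counit : comul ≫ S.tmap (𝟙 X) counit ≫ S.runit X = 𝟙 X

/-- The unit object as a comonoid, the source of the comonad structure on the action by `S.I`. -/
def unitComonoid (S : RightSkewMonoidal M) : S.Comonoid where
  X := S.I
  comul := S.lunit S.I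
  counit := 𝟙 S.I
  coassoc := by rw [← Category.assoc, ← S.lunit_natural, Category.assoc, S.skm3]
  comul_counit_id := by rw [S.tmap_id, Category.comp_id]
  comul_id_counit := by rw [S.tmap_id, Category.id_comp, S.skm5]

end RightSkewMonoidal

namespace IsOplaxRightActegory

variable {M : Type u₁} [Category.{v₁} M] {S : RightSkewMonoidal M}
  {A : Type u₂} [Category.{v₂} A] {act : A → M → A}
  {actmap : ∀ {x x' : A} {m m' : M}, (x ⟶ x') → (m ⟶ m') → (act x m ⟶ act x' m')}
  {a2 : ∀ (x : A) (m n : M), act x (S.t m n) ⟶ act (act x m) n}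
  {a0 : ∀ x : A, act x S.I ⟶ x}

theorem actmap_id_comp (hA : IsOplaxRightActegory S act actmap a2 a0) (x : A) {m m' m'' : M}
    (g : m ⟶ m') (g' : m' ⟶ m'') :
    actmap (𝟙 x) (g ≫ g') = actmap (𝟙 x) g ≫ actmap (𝟙 x) g' := by
  rw [← hA.actmap_comp, Category.comp_id]

theorem actmap_comp_id (hA : IsOplaxRightActegory S act actmap a2 a0) {x x' x'' : A}
    (f : x ⟶ x') (f' : x' ⟶ x'') (m : M) :
    actmap (f ≫ f') (𝟙 m) = actmap f (𝟙 m) ≫ actmap f' (𝟙 m) := by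
  rw [← hA.actmap_comp, Category.comp_id]

theorem a2_comp_actmap_id (hA : IsOplaxRightActegory S act actmap a2 a0) (x : A) (m : M)
    {n n' : M} (h : n ⟶ n') :
    a2 x m n ≫ actmap (𝟙 (act x m)) h = actmap (𝟙 x) (S.tmap (𝟙 m) h) ≫ a2 x m n' := by
  rw [hA.a2_natural, hA.actmap_id]

theorem a2_comp_actmap_comp_id (hA : IsOplaxRightActegory S act actmap a2 a0) (x : A) {y : A}
    {m m' : M} (n : M) (g : m ⟶ m') (k : act x m' ⟶ y) :
    a2 x m n ≫ actmap (actmap (𝟙 x) g ≫ k) (𝟙 n) =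
      actmap (𝟙 x) (S.tmap g (𝟙 n)) ≫ a2 x m' n ≫ actmap k (𝟙 n) := by
  rw [hA.actmap_comp_id, ← Category.assoc, ← hA.a2_natural, Category.assoc]

theorem a2_comp_actmap_id_comp_a2 (hA : IsOplaxRightActegory S act actmap a2 a0) (x : A)
    (m : M) {n p q : M} (h : n ⟶ S.t p q) :
    a2 x m n ≫ actmap (𝟙 (act x m)) h ≫ a2 (act x m) p q =
      actmap (𝟙 x) (S.tmap (𝟙 m) h ≫ S.assoc m p q) ≫
        a2 x (S.t m p) q ≫ actmap (a2 x m p) (𝟙 q) := by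
  rw [← Category.assoc, hA.a2_comp_actmap_id, Category.assoc, hA.ola1, hA.actmap_id_comp,
    Category.assoc]

theorem a2_comp_actmap_id_comp_a0 (hA : IsOplaxRightActegory S act actmap a2 a0) (x : A)
    (m : M) {n : M} (e : n ⟶ S.I) :
    a2 x m n ≫ actmap (𝟙 (act x m)) e ≫ a0 (act x m) =
      actmap (𝟙 x) (S.tmap (𝟙 m) e ≫ S.runit m) := by
  rw [← Category.assoc, hA.a2_comp_actmap_id, Category.assoc, hA.ola2, hA.actmap_id_comp]

theorem comul_app_coassoc (hA : IsOplaxRightActegory S act actmap a2 a0) (C : S.Comonoid)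
    (x : A) :
    (actmap (𝟙 x) C.comul ≫ a2 x C.X C.X) ≫
        actmap (actmap (𝟙 x) C.comul ≫ a2 x C.X C.X) (𝟙 C.X) =
      (actmap (𝟙 x) C.comul ≫ a2 x C.X C.X) ≫
        actmap (𝟙 (act x C.X)) C.comul ≫ a2 (act x C.X) C.X C.X := by
  calc
    _ = actmap (𝟙 x) (C.comul ≫ S.tmap C.comul (𝟙 C.X)) ≫
          a2 x (S.t C.X C.X) C.X ≫ actmap (a2 x C.X C.X) (𝟙 C.X) := by
      rw [Category.assoc, hA.a2_comp_actmap_comp_id, hA.actmap_id_comp, Category.assoc]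
    _ = actmap (𝟙 x) (C.comul ≫ S.tmap (𝟙 C.X) C.comul ≫ S.assoc C.X C.X C.X) ≫
          a2 x (S.t C.X C.X) C.X ≫ actmap (a2 x C.X C.X) (𝟙 C.X) := by
      rw [C.coassoc]
    _ = _ := by
      rw [Category.assoc, hA.a2_comp_actmap_id_comp_a2, hA.actmap_id_comp, Category.assoc]

theorem comul_app_comp_counit_app (hA : IsOplaxRightActegory S act actmap a2 a0)
    (C : S.Comonoid) (x : A) :
    (actmap (𝟙 x) C.comul ≫ a2 x C.X C.X) ≫
        actmap (𝟙 (act x C.X)) C.counit ≫ a0 (act x C.X) = 𝟙 (act x C.X) := by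
  rw [Category.assoc, hA.a2_comp_actmap_id_comp_a0, ← hA.actmap_id_comp, C.comul_id_counit,
    hA.actmap_id]

theorem comul_app_comp_actmap_counit_app (hA : IsOplaxRightActegory S act actmap a2 a0)
    (C : S.Comonoid) (x : A) :
    (actmap (𝟙 x) C.comul ≫ a2 x C.X C.X) ≫
        actmap (actmap (𝟙 x) C.counit ≫ a0 x) (𝟙 C.X) = 𝟙 (act x C.X) := by
  rw [Category.assoc, hA.a2_comp_actmap_comp_id, ← Category.assoc, ← hA.actmap_id_comp,
    C.comul_counit_id, hA.ola3]

/-- The action `m ↦ (−) ⊙ m` as a functor from `M` to the endofunctors of `A`. Together with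
`actRightTensor` and `actRightUnit` it is the opmonoidal functor corresponding to the actegory. -/
def actRight (hA : IsOplaxRightActegory S act actmap a2 a0) : M ⥤ A ⥤ A where
  obj m :=
    { obj := fun x => act x m
      map := fun f => actmap f (𝟙 m)
      map_id := fun x => hA.actmap_id x m
      map_comp := fun f f' => hA.actmap_comp_id f f' m }
  map g :=
    { app := fun x => actmap (𝟙 x) g
      naturality := fun _ _ _ => by
        simp only [← hA.actmap_comp, Category.id_comp, Category.comp_id] }
  map_id m := by ext x; exact hA.actmap_id x m
  map_comp g g' := by ext x; exact hA.actmap_id_comp x g g'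

/-- The family `a2` as the tensor constraint of `actRight`. Composition of endofunctors is written
in diagrammatic order, matching the order of the two actions. -/
def actRightTensor (hA : IsOplaxRightActegory S act actmap a2 a0) (m n : M) :
    hA.actRight.obj (S.t m n) ⟶ hA.actRight.obj m ⋙ hA.actRight.obj n where
  app x := a2 x m n
  naturality x x' f := by
    change actmap f (𝟙 (S.t m n)) ≫ a2 x' m n = a2 x m n ≫ actmap (actmap f (𝟙 m)) (𝟙 n)
    rw [← hA.a2_natural, S.tmap_id]

/-- The family `a0` as the unit constraint of `actRight`. -/
def actRightUnit (hA : IsOplaxRightActegory S act actmap a2 a0) :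
    hA.actRight.obj S.I ⟶ 𝟭 A where
  app := a0
  naturality _ _ f := hA.a0_natural f

/-- The comonad on `A` that a comonoid of `M` induces through its right action. -/
def actRightComonad (hA : IsOplaxRightActegory S act actmap a2 a0) (C : S.Comonoid) :
    Comonad A where
  toFunctor := hA.actRight.obj C.X
  ε := hA.actRight.map C.counit ≫ hA.actRightUnit
  δ := hA.actRight.map C.comul ≫ hA.actRightTensor C.X C.X
  coassoc := hA.comul_app_coassoc C
  left_counit := hA.comul_app_comp_counit_app C
  right_counit := hA.comul_app_comp_actmap_counit_app C

theorem actRightComonad_unitComonoid_ε_app (hA : IsOplaxRightActegory S act actmap a2 a0)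
    (x : A) : (hA.actRightComonad S.unitComonoid).ε.app x = a0 x := by
  change actmap (𝟙 x) (𝟙 S.I) ≫ a0 x = a0 x
  rw [hA.actmap_id, Category.id_comp]

end IsOplaxRightActegory

/-- For an oplax right actegory `(A, ⊙, a², a⁰)` over a right skew monoidal category
`(M, S)`, the endofunctor `(−) ⊙ I` of `A` (whose action on a morphism `f` is
`actmap f (𝟙 I)`) carries a comonad structure, with counit `ε_x := a⁰_x` and
comultiplication `δ_x := (𝟙 x ⊙ λ_I) ≫ a²_{x,I,I}`: both are natural, `δ` is
coassociative, and the two counit laws hold. -/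
theorem actOnUnit_comonad {M : Type u₁} [Category.{v₁} M] (S : RightSkewMonoidal M)
    {A : Type u₂} [Category.{v₂} A]
    (act : A → M → A)
    (actmap : ∀ {x x' : A} {m m' : M}, (x ⟶ x') → (m ⟶ m') → (act x m ⟶ act x' m'))
    (a2 : ∀ (x : A) (m n : M), act x (S.t m n) ⟶ act (act x m) n)
    (a0 : ∀ x : A, act x S.I ⟶ x)
    (hA : IsOplaxRightActegory S act actmap a2 a0)
    (δ : ∀ x : A, act x S.I ⟶ act (act x S.I) S.I)
    (hδ : ∀ x : A, δ x = actmap (𝟙 x) (S.lunit S.I) ≫ a2 x S.I S.I) :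
    -- naturality of the counit `ε := a0`
    (∀ {x x' : A} (f : x ⟶ x'), actmap f (𝟙 S.I) ≫ a0 x' = a0 x ≫ f) ∧
    -- naturality of the comultiplication `δ`
    (∀ {x x' : A} (f : x ⟶ x'),
      actmap f (𝟙 S.I) ≫ δ x' = δ x ≫ actmap (actmap f (𝟙 S.I)) (𝟙 S.I)) ∧
    -- coassociativity
    (∀ x : A, δ x ≫ δ (act x S.I) = δ x ≫ actmap (δ x) (𝟙 S.I)) ∧
    -- the two counit laws
    (∀ x : A, δ x ≫ a0 (act x S.I) = 𝟙 (act x S.I)) ∧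
    (∀ x : A, δ x ≫ actmap (a0 x) (𝟙 S.I) = 𝟙 (act x S.I)) := by
  let G : Comonad A := hA.actRightComonad S.unitComonoid
  have hε : ∀ x, G.ε.app x = a0 x := hA.actRightComonad_unitComonoid_ε_app
  obtain rfl : δ = fun x => G.δ.app x := funext hδ
  refine ⟨hA.a0_natural, fun f => G.δ.naturality f, fun x => (G.coassoc x).symm, fun x => ?_,
    fun x => ?_⟩
  · rw [← hε]
    exact G.left_counit x
  · rw [← hε]
    exact G.right_counit x
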